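/- Let each f_i : ℝ^d → ℝ (i = 1,…,n) be differentiable and μ-strongly convex with μ ≥ 0, let f = (1/n)∑ f_i, let x_* ∈ argmin f and f^* = min f, let γ > 0, and fix x_k, w_k ∈ ℝ^d. Define x_{k+1}(i) = prox_{γ f_i}(x_k + γ(∇f_i(w_k) − ∇f(w_k))), x̄_{k+1} = (1/n)∑_{i=1}^n x_{k+1}(i), and ψ_i = f_i − f. Then: (1/n)∑_{i=1}^n ‖x_{k+1}(i) − x_*‖² ≤ (1/(1+μγ))‖x_k − x_*‖² − (2/(μ + 1/γ))·(f(x̄_{k+1}) − f^*) − (1/n)∑_{i=1}^n ‖x_{k+1}(i) − x̄_{k+1}‖² − (1/(1+μγ))‖x̄_{k+1} − x_k‖² − (2/(μ + 1/γ))·(1/n)∑_{i=1}^n ⟨∇ψ_i(x̄_{k+1}) − ∇ψ_i(w_k), x_{k+1}(i) − x̄_{k+1}⟩. -/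

import Mathlib

open RealInnerProductSpace Finset

/-!
The point `X i` minimises `z ↦ γ f_i(z) + ½‖z - v_i‖²` with `v_i = x_k + γ δ_i` and
`δ_i = ∇f_i(w_k) - ∇f(w_k) = ∇ψ_i(w_k)`. Its first-order condition
`γ ∇f_i(X_i) + X_i - v_i = 0` (`prox_optimality`), inserted into strong convexity of `f_i` at `X_i`,
gives the three-point inequality `prox_three_point`, an upper bound on
`(1 + μγ)‖X_i - x_*‖²` involving `f_i(x_*) - f_i(X_i)`.
Strong convexity of `f_i` at `x̄` bounds `f_i(X_i)` below by its quadratic model at `x̄`.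
Adding the two and averaging over `i`, every term linear in `X_i - x̄` or in `δ_i` alone vanishes,
since both families have mean zero, and dividing by `1 + μγ` gives the claim.
-/

section Auxiliary

variable {E : Type*} [NormedAddCommGroup E] [InnerProductSpace ℝ E] [CompleteSpace E]

theorem inner_gradient_eq_fderiv (g : E → ℝ) (x y : E) :
    ⟪gradient g x, y⟫ = fderiv ℝ g x y := by
  simp [gradient]

/-- First-order optimality condition of the proximal subproblem, tested against a direction `y`. -/
theorem prox_optimality {g : E → ℝ} (hg : Differentiable ℝ g) {γ : ℝ} {v p : E}
    (hp : ∀ z, γ * g p + (1 / 2) * ‖p - v‖ ^ 2 ≤ γ * g z + (1 / 2) * ‖z - v‖ ^ 2) (y : E) :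
    γ * ⟪gradient g p, y⟫ + ⟪p - v, y⟫ = 0 := by
  have hmin : IsLocalMin (fun z => γ * g z + (1 / 2) * ‖z - v‖ ^ 2) p :=
    Filter.Eventually.of_forall hp
  have hder := ((hg p).hasFDerivAt.const_mul γ).add
    ((((hasFDerivAt_id p).sub_const v).norm_sq).const_mul (1 / 2))
  have h0 := congrArg (fun L => L y) (hmin.hasFDerivAt_eq_zero hder)
  rw [inner_gradient_eq_fderiv]
  simpa [inner_sub_left] using h0

/-- Three-point inequality for the proximal step: a minimiser `p` of the `(1 + μγ)`-strongly convex
proximal objective beats any `z` by at least `(1 + μγ)/2 · ‖p - z‖²`. -/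
theorem prox_three_point {g : E → ℝ} (hg : Differentiable ℝ g) {μ γ : ℝ} (hγ : 0 < γ) {v p : E}
    (hsc : ∀ x y, g y ≥ g x + ⟪gradient g x, y - x⟫ + μ / 2 * ‖x - y‖ ^ 2)
    (hp : ∀ z, γ * g p + (1 / 2) * ‖p - v‖ ^ 2 ≤ γ * g z + (1 / 2) * ‖z - v‖ ^ 2) (z : E) :
    (1 + μ * γ) * ‖p - z‖ ^ 2
      ≤ 2 * γ * (g z - g p) + ‖z - v‖ ^ 2 - ‖p - v‖ ^ 2 := by
  have hopt := prox_optimality hg hp (z - p)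
  have hs := mul_le_mul_of_nonneg_left (hsc p z) hγ.le
  have hexp : ‖z - v‖ ^ 2 = ‖p - v‖ ^ 2 + 2 * ⟪p - v, z - p⟫ + ‖p - z‖ ^ 2 := by
    rw [norm_sub_rev p z, ← norm_add_sq_real]
    congr 2
    abel
  linarith

theorem gradient_average {n : ℕ} {f : Fin n → E → ℝ} (hf : ∀ i, Differentiable ℝ (f i)) (x : E) :
    gradient (fun x => (1 / (n : ℝ)) * ∑ i, f i x) x
      = (1 / (n : ℝ)) • ∑ i, gradient (f i) x := by
  have h := (HasFDerivAt.fun_sum (u := univ)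
    (fun i _ => (hf i x).hasFDerivAt)).const_mul (1 / (n : ℝ))
  simp only [gradient]
  rw [h.fderiv, map_smulₛₗ, map_sum]
  simp

end Auxiliary

/-- Deviations from the mean of a nonempty finite family sum to zero. -/
theorem sum_sub_average {V : Type*} [AddCommGroup V] [Module ℝ V] {n : ℕ} (hn : 0 < n)
    (u : Fin n → V) :
    ∑ i, (u i - (1 / (n : ℝ)) • ∑ j, u j) = 0 := by
  have hn0 : (n : ℝ) ≠ 0 := by positivity
  rw [sum_sub_distrib, sum_const, card_univ, Fintype.card_fin, ← Nat.cast_smul_eq_nsmul ℝ,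
    smul_smul, mul_one_div_cancel hn0, one_smul, sub_self]


/-- Lemma 5 of the paper (amended first Lyapunov bound, keeping the functional
suboptimality term `f(x̄_{k+1}) − f^*`). -/
theorem lsvrp_first_lyapunov_bound_amended
    (d n : ℕ) (hn : 0 < n)
    (f : Fin n → EuclideanSpace ℝ (Fin d) → ℝ) (μ γ : ℝ)
    (hμ : 0 ≤ μ) (hγ : 0 < γ)
    (hdiff : ∀ i, Differentiable ℝ (f i))
    (F : EuclideanSpace ℝ (Fin d) → ℝ)
    (hF : F = fun x => (1 / (n : ℝ)) * ∑ i, f i x)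
    (hsc : ∀ i, ∀ x y : EuclideanSpace ℝ (Fin d),
      f i y ≥ f i x + ⟪gradient (f i) x, y - x⟫ + μ / 2 * ‖x - y‖ ^ 2)
    (xstar : EuclideanSpace ℝ (Fin d)) (hxstar : ∀ x, F xstar ≤ F x)
    (Fstar : ℝ) (hFstar : Fstar = F xstar)
    (xk wk : EuclideanSpace ℝ (Fin d))
    (ψ : Fin n → EuclideanSpace ℝ (Fin d) → ℝ)
    (hψ : ∀ i, ψ i = fun x => f i x - F x)
    (X : Fin n → EuclideanSpace ℝ (Fin d))
    (hX : ∀ i, ∀ z : EuclideanSpace ℝ (Fin d),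
      γ * f i (X i)
          + (1 / 2) * ‖X i - (xk + γ • (gradient (f i) wk - gradient F wk))‖ ^ 2
        ≤ γ * f i z
          + (1 / 2) * ‖z - (xk + γ • (gradient (f i) wk - gradient F wk))‖ ^ 2)
    (xbar : EuclideanSpace ℝ (Fin d))
    (hxbar : xbar = (1 / (n : ℝ)) • ∑ i, X i) :
    (1 / (n : ℝ)) * ∑ i, ‖X i - xstar‖ ^ 2
      ≤ (1 / (1 + μ * γ)) * ‖xk - xstar‖ ^ 2
        - (2 / (μ + 1 / γ)) * (F xbar - Fstar)
        - (1 / (n : ℝ)) * ∑ i, ‖X i - xbar‖ ^ 2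
        - (1 / (1 + μ * γ)) * ‖xbar - xk‖ ^ 2
        - (2 / (μ + 1 / γ)) * ((1 / (n : ℝ)) * ∑ i,
            ⟪gradient (ψ i) xbar - gradient (ψ i) wk, X i - xbar⟫) := by
  have hn0 : (0 : ℝ) < n := by exact_mod_cast hn
  have hFd : Differentiable ℝ F := by
    rw [hF]
    fun_prop
  have hgψ : ∀ i x, gradient (ψ i) x = gradient (f i) x - gradient F x := by
    intro i x
    rw [hψ i]
    simp only [gradient]
    rw [fderiv_fun_sub (hdiff i x) (hFd x), map_sub]
  have hXsum : ∑ i, X i - n • xbar = 0 := by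
    simpa [hxbar] using sum_sub_average hn X
  have hδsum : ∑ i, gradient (ψ i) wk = 0 := by
    simp only [hgψ]
    rw [hF, gradient_average hdiff]
    exact sum_sub_average hn _
  -- The last two inner products have mean zero over `i`.
  have key : ∀ i, (1 + μ * γ) * ‖X i - xstar‖ ^ 2
      ≤ 2 * γ * (f i xstar - f i xbar) + (‖xk - xstar‖ ^ 2 - ‖xbar - xk‖ ^ 2)
        - (1 + μ * γ) * ‖X i - xbar‖ ^ 2
        - 2 * γ * ⟪gradient (ψ i) xbar - gradient (ψ i) wk, X i - xbar⟫
        - 2 * ⟪X i - xbar, xbar - xk + γ • gradient F xbar⟫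
        + 2 * γ * ⟪gradient (ψ i) wk, xbar - xstar⟫ := by
    intro i
    have h1 := prox_three_point (hdiff i) hγ (hsc i) (hX i) xstar
    have h2 := mul_le_mul_of_nonneg_left (hsc i xbar (X i)) hγ.le
    rw [← hgψ i wk] at h1
    have e1 : ‖xstar - (xk + γ • gradient (ψ i) wk)‖ ^ 2
        = ‖xk - xstar‖ ^ 2 + 2 * γ * ⟪gradient (ψ i) wk, xk - xstar⟫
          + ‖γ • gradient (ψ i) wk‖ ^ 2 := by
      rw [norm_sub_rev, add_sub_right_comm, norm_add_sq_real, real_inner_smul_right,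
        real_inner_comm]
      ring
    have e2 : ‖X i - (xk + γ • gradient (ψ i) wk)‖ ^ 2
        = ‖X i - xbar‖ ^ 2 + 2 * ⟪X i - xbar, xbar - xk⟫ + ‖xbar - xk‖ ^ 2
          - 2 * γ * ⟪gradient (ψ i) wk, (X i - xbar) + (xbar - xk)⟫
          + ‖γ • gradient (ψ i) wk‖ ^ 2 := by
      rw [← norm_add_sq_real, ← sub_sub, norm_sub_sq_real, real_inner_smul_right,
        real_inner_comm, sub_add_sub_cancel]
      ring
    have e3 : gradient (f i) xbar = gradient (ψ i) xbar + gradient F xbar := by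
      rw [hgψ]
      abel
    have e4 : ⟪gradient (ψ i) wk, xbar - xstar⟫
        = ⟪gradient (ψ i) wk, xbar - xk⟫ + ⟪gradient (ψ i) wk, xk - xstar⟫ := by
      rw [← inner_add_right, sub_add_sub_cancel]
    rw [e1, e2, inner_add_right] at h1
    rw [e3, inner_add_left, norm_sub_rev xbar (X i)] at h2
    rw [inner_sub_left, inner_add_right, real_inner_smul_right, e4,
      real_inner_comm (gradient F xbar)]
    linarith
  have hsum := sum_le_sum fun i (_ : i ∈ univ) => key i
  simp only [sum_add_distrib, sum_sub_distrib, ← mul_sum, ← sum_inner, sum_const, card_univ,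
    Fintype.card_fin, nsmul_eq_mul] at hsum
  rw [hXsum, hδsum, inner_zero_left, inner_zero_left] at hsum
  have hf1 : ∀ x, ∑ i, f i x = n * F x := by
    intro x
    rw [hF]
    field_simp
  rw [hf1, hf1] at hsum
  have hpos : 0 < 1 + μ * γ := by positivity
  have hc : 2 / (μ + 1 / γ) = 2 * γ / (1 + μ * γ) := by
    field_simp
    ring
  rw [hc, hFstar]
  generalize ∑ i, ‖X i - xstar‖ ^ 2 = A at *
  generalize ∑ i, ‖X i - xbar‖ ^ 2 = B at *
  generalize ∑ i, ⟪gradient (ψ i) xbar - gradient (ψ i) wk, X i - xbar⟫ = C at *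
  have hdiv := div_le_div_of_nonneg_right hsum (mul_pos hn0 hpos).le
  refine le_of_eq_of_le ?_ (hdiv.trans_eq ?_)
  · field_simp
  · field_simp
    ring
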